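/- arXiv:1512.05423 — 5 statements merged into one kernel-verified Lean document; each statement's English description precedes it below -/
import Mathlib

section
/- Let {X_k}_{k≥1} be a stationary real-valued discrete-time stochastic process such that for every n the random vector X^n = (X_1,…,X_n) has a probability density f^(n) on ℝ^n with finite second moments, and suppose the sequence of densities f^(n) is (c1,c2)-regular, i.e. there exist constants c1 > 0 and c2 ≥ 0 (independent of n) such that every f^(n) is (c1,c2)-regular. Then there exists a finite constant c, independent of n, such that (1/n)·D(f^(n)) ≤ c for all n ≥ 1. -/
open MeasureTheory Real ProbabilityTheory
open scoped BigOperators ENNReal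

noncomputable section

/-- A probability density on `ℝⁿ` (Euclidean space): nonnegative, integrable, integrating to one. -/
def IsDensity {n : ℕ} (f : EuclideanSpace ℝ (Fin n) → ℝ) : Prop :=
  (∀ x, 0 ≤ f x) ∧ Integrable f ∧ (∫ x, f x) = 1

/-- `(c₁, c₂)`-regularity of a density (Polyanskiy–Wu): everywhere positive, differentiable,
and `‖∇ log f(x)‖ ≤ c₁‖x‖ + c₂`. -/
def IsRegularDensity {n : ℕ} (c₁ c₂ : ℝ) (f : EuclideanSpace ℝ (Fin n) → ℝ) : Prop :=
  (∀ x, 0 < f x) ∧ Differentiable ℝ f ∧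
    ∀ x : EuclideanSpace ℝ (Fin n),
      ‖gradient (fun y => Real.log (f y)) x‖ ≤ c₁ * ‖x‖ + c₂

/-- Kullback–Leibler divergence between two densities (natural logarithm). -/
def klDiv' {n : ℕ} (f g : EuclideanSpace ℝ (Fin n) → ℝ) : ℝ :=
  ∫ x, f x * Real.log (f x / g x)

/-- Mean vector of a density. -/
def meanVec {n : ℕ} (f : EuclideanSpace ℝ (Fin n) → ℝ) : Fin n → ℝ :=
  fun i => ∫ x, f x * x i

/-- Covariance matrix of a density. -/
def covMat {n : ℕ} (f : EuclideanSpace ℝ (Fin n) → ℝ) : Matrix (Fin n) (Fin n) ℝ :=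
  Matrix.of fun i j => ∫ x, f x * (x i - meanVec f i) * (x j - meanVec f j)

/-- The Gaussian density on `ℝⁿ` with mean vector `m` and covariance matrix `R`. -/
def gaussDensity {n : ℕ} (m : Fin n → ℝ) (R : Matrix (Fin n) (Fin n) ℝ)
    (x : EuclideanSpace ℝ (Fin n)) : ℝ :=
  (2 * π) ^ (-(n : ℝ) / 2) * R.det ^ (-(1 : ℝ) / 2) *
    Real.exp (-(1 / 2) * ∑ i, ∑ j, (x i - m i) * R⁻¹ i j * (x j - m j))

/-- `D(f) = D(f ‖ g)` where `g` is the Gaussian density with the same mean vector and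
covariance matrix as `f`. -/
def KLtoGauss {n : ℕ} (f : EuclideanSpace ℝ (Fin n) → ℝ) : ℝ :=
  klDiv' f (gaussDensity (meanVec f) (covMat f))

/-- The vector `(X_k, X_{k+1}, …, X_{k+n-1})` of a process, as a point of Euclidean space. -/
def pathVec {Ω : Type*} (X : ℕ → Ω → ℝ) (k n : ℕ) (ω : Ω) : EuclideanSpace ℝ (Fin n) :=
  (WithLp.equiv 2 (Fin n → ℝ)).symm fun i : Fin n => X (k + i) ω

/-- The centered isotropic Gaussian density on `ℝⁿ` with covariance `v • Iₙ`. -/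
def isoGaussDensity (n : ℕ) (v : ℝ) (x : EuclideanSpace ℝ (Fin n)) : ℝ :=
  (2 * π * v) ^ (-(n : ℝ) / 2) * Real.exp (-‖x‖ ^ 2 / (2 * v))

/-- Log-concavity of a nonnegative function. -/
def LogConcaveFn {n : ℕ} (f : EuclideanSpace ℝ (Fin n) → ℝ) : Prop :=
  ∀ x y : EuclideanSpace ℝ (Fin n), ∀ t : ℝ, 0 ≤ t → t ≤ 1 →
    f x ^ t * f y ^ (1 - t) ≤ f (t • x + (1 - t) • y)

/-- A zero-mean Gaussian random vector with covariance matrix `R`: every linear functional of it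
is a centered real Gaussian with the corresponding variance. -/
def IsCenteredGaussianVec {Ω : Type*} [MeasurableSpace Ω] {n : ℕ} (P : Measure Ω)
    (W : Ω → EuclideanSpace ℝ (Fin n)) (R : Matrix (Fin n) (Fin n) ℝ) : Prop :=
  ∀ a : Fin n → ℝ, Measure.map (fun ω => ∑ i, a i * W ω i) P
    = gaussianReal 0 (Real.toNNReal (∑ i, ∑ j, a i * R i j * a j))

/-- Hadamard (element-wise) product of two Euclidean vectors. -/
def hadamard {n : ℕ} (u v : EuclideanSpace ℝ (Fin n)) : EuclideanSpace ℝ (Fin n) :=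
  (WithLp.equiv 2 (Fin n → ℝ)).symm fun i => u i * v i

end

noncomputable section
open MeasureTheory Real ProbabilityTheory

lemma log_lip {n : ℕ} {f : EuclideanSpace ℝ (Fin n) → ℝ} {c₁ c₂ : ℝ} (hc₁ : 0 < c₁) (hc₂ : 0 ≤ c₂)
    (h : IsRegularDensity c₁ c₂ f) (x : EuclideanSpace ℝ (Fin n)) :
    |Real.log (f x) - Real.log (f 0)| ≤ (c₁ + c₂) * ‖x‖ ^ 2 + c₂ := by
  obtain ⟨hpos, hdiff, hgrad⟩ := h
  have hd : Differentiable ℝ (fun y => Real.log (f y)) := hdiff.log (fun y => (hpos y).ne')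
  have hb : ∀ y ∈ Metric.closedBall (0 : EuclideanSpace ℝ (Fin n)) ‖x‖,
      ‖fderiv ℝ (fun y => Real.log (f y)) y‖ ≤ c₁ * ‖x‖ + c₂ := by
    intro y hy
    have h1 := hgrad y
    rw [gradient, LinearIsometryEquiv.norm_map] at h1
    have : ‖y‖ ≤ ‖x‖ := by simpa using hy
    nlinarith
  have := (convex_closedBall (0 : EuclideanSpace ℝ (Fin n)) ‖x‖).norm_image_sub_le_of_norm_fderiv_le
    (x := 0) (y := x) (fun y _ => hd y) hb (by simp) (by simp)
  rw [Real.norm_eq_abs, sub_zero] at this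
  nlinarith [norm_nonneg x, mul_nonneg hc₂ (sq_nonneg (‖x‖ - 1)), mul_nonneg hc₂ (norm_nonneg x), mul_nonneg hc₂ (sq_nonneg ‖x‖)]

lemma log_zero_le {n : ℕ} {f : EuclideanSpace ℝ (Fin n) → ℝ} {c₁ c₂ : ℝ} (hc₁ : 0 < c₁) (hc₂ : 0 ≤ c₂)
    (h : IsRegularDensity c₁ c₂ f) (hdens : IsDensity f) :
    Real.log (f 0) ≤ c₂ - n / 2 * Real.log (π / (c₁ + c₂)) := by
  have ha : 0 < c₁ + c₂ := by positivity
  have hgInt := GaussianFourier.integral_rexp_neg_mul_sq_norm (V := EuclideanSpace ℝ (Fin n)) ha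
  have hpa : 0 < π / (c₁ + c₂) := by positivity
  have hI : Integrable (fun v : EuclideanSpace ℝ (Fin n) => rexp (-(c₁ + c₂) * ‖v‖ ^ 2)) := by
    apply Integrable.of_integral_ne_zero
    rw [hgInt]
    positivity
  have hle : ∫ v : EuclideanSpace ℝ (Fin n), f 0 * rexp (-c₂) * rexp (-(c₁ + c₂) * ‖v‖ ^ 2) ≤ ∫ v, f v := by
    apply integral_mono (hI.const_mul _) hdens.2.1
    intro v
    have h1 := (abs_le.1 (log_lip hc₁ hc₂ h v)).1
    show f 0 * rexp (-c₂) * rexp (-(c₁ + c₂) * ‖v‖ ^ 2) ≤ f v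
    rw [← Real.exp_log (h.1 v)]
    nth_rw 1 [← Real.exp_log (h.1 0)]
    rw [← Real.exp_add, ← Real.exp_add]
    apply Real.exp_le_exp.2
    linarith
  rw [integral_const_mul, hdens.2.2, hgInt] at hle
  have h0 := h.1 0
  have hp : 0 < (π / (c₁ + c₂)) ^ ((Module.finrank ℝ (EuclideanSpace ℝ (Fin n)) : ℝ) / 2) := by positivity
  have := Real.log_le_log (by positivity) hle
  rw [Real.log_mul (by positivity) (by positivity), Real.log_mul (by positivity) (by positivity),
    Real.log_exp, Real.log_rpow hpa, Real.log_one] at this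
  simp only [finrank_euclideanSpace, Fintype.card_fin] at this
  linarith

lemma integral_three {α : Type*} [MeasurableSpace α] {μ : Measure α} {a b c : α → ℝ}
    (ha : Integrable a μ) (hb : Integrable b μ) (hc : Integrable c μ) (r s t : ℝ) :
    ∫ x, (r * a x + s * b x + t * c x) ∂μ
      = r * ∫ x, a x ∂μ + s * ∫ x, b x ∂μ + t * ∫ x, c x ∂μ := by
  have h1 : Integrable (fun x => r * a x + s * b x) μ := (ha.const_mul r).add (hb.const_mul s)
  rw [integral_add h1 (hc.const_mul t), integral_add (ha.const_mul r) (hb.const_mul s),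
    integral_const_mul, integral_const_mul, integral_const_mul]

section mom
variable {n : ℕ} {f : EuclideanSpace ℝ (Fin n) → ℝ}

lemma coord_abs_le (x : EuclideanSpace ℝ (Fin n)) (i : Fin n) : x i ^ 2 ≤ ‖x‖ ^ 2 := by
  have := PiLp.norm_apply_le x i
  rw [Real.norm_eq_abs] at this
  rw [← sq_abs]
  gcongr

lemma int_prod (hdens : IsDensity f) (hc : Continuous f)
    (hmom : Integrable fun x : EuclideanSpace ℝ (Fin n) => f x * ‖x‖ ^ 2) (a b : ℝ) (i j : Fin n) :
    Integrable fun x : EuclideanSpace ℝ (Fin n) => f x * (x i - a) * (x j - b) := by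
  refine Integrable.mono' (g := fun x => 2 * (f x * ‖x‖ ^ 2) + (a ^ 2 + b ^ 2) * f x)
    ((hmom.const_mul _).add (hdens.2.1.const_mul _)) ?_ ?_
  · apply Continuous.aestronglyMeasurable
    fun_prop
  · refine Filter.Eventually.of_forall fun x => ?_
    rw [mul_assoc, norm_mul, Real.norm_of_nonneg (hdens.1 x), Real.norm_eq_abs]
    have h1 := coord_abs_le x i
    have h2 := coord_abs_le x j
    have : |(x i - a) * (x j - b)| ≤ 2 * ‖x‖ ^ 2 + (a ^ 2 + b ^ 2) := by
      rw [abs_le]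
      constructor <;> nlinarith [sq_nonneg (x i + a), sq_nonneg (x j + b), sq_nonneg (x i - a + (x j - b)), sq_nonneg (x i - a - (x j - b))]
    nlinarith [mul_le_mul_of_nonneg_left this (hdens.1 x)]

lemma int_lin (hdens : IsDensity f) (hc : Continuous f)
    (hmom : Integrable fun x : EuclideanSpace ℝ (Fin n) => f x * ‖x‖ ^ 2) (i : Fin n) :
    Integrable fun x : EuclideanSpace ℝ (Fin n) => f x * x i := by
  have h := ((int_prod hdens hc hmom 0 0 i i).sub (int_prod hdens hc hmom 0 1 i i))
  refine h.congr (Filter.Eventually.of_forall fun x => ?_)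
  simp only [Pi.sub_apply]
  ring

lemma quad_int (hdens : IsDensity f) (hc : Continuous f)
    (hmom : Integrable fun x : EuclideanSpace ℝ (Fin n) => f x * ‖x‖ ^ 2)
    (A : Matrix (Fin n) (Fin n) ℝ) :
    Integrable (fun x : EuclideanSpace ℝ (Fin n) => f x * ∑ i, ∑ j, (x i - meanVec f i) * A i j * (x j - meanVec f j))
    ∧ ∫ x, f x * ∑ i, ∑ j, (x i - meanVec f i) * A i j * (x j - meanVec f j)
      = ∑ i, ∑ j, A i j * covMat f i j := by
  have he : (fun x : EuclideanSpace ℝ (Fin n) => f x * ∑ i, ∑ j, (x i - meanVec f i) * A i j * (x j - meanVec f j))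
      = fun x => ∑ i, ∑ j, A i j * (f x * (x i - meanVec f i) * (x j - meanVec f j)) := by
    funext x
    rw [Finset.mul_sum]
    refine Finset.sum_congr rfl fun i _ => ?_
    rw [Finset.mul_sum]
    refine Finset.sum_congr rfl fun j _ => ?_
    ring
  have hi : ∀ i j, Integrable fun x : EuclideanSpace ℝ (Fin n) =>
      A i j * (f x * (x i - meanVec f i) * (x j - meanVec f j)) :=
    fun i j => (int_prod hdens hc hmom _ _ i j).const_mul _
  rw [he]
  refine ⟨integrable_finsetSum _ fun i _ => integrable_finsetSum _ fun j _ => hi i j, ?_⟩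
  rw [integral_finsetSum _ fun i _ => integrable_finsetSum _ fun j _ => hi i j]
  refine Finset.sum_congr rfl fun i _ => ?_
  rw [integral_finsetSum _ fun j _ => hi i j]
  refine Finset.sum_congr rfl fun j _ => ?_
  rw [integral_const_mul]
  rfl

lemma cov_symm (i j : Fin n) : covMat f i j = covMat f j i := by
  simp only [covMat, Matrix.of_apply]
  congr 1
  funext x
  ring

lemma cov_psd (hdens : IsDensity f) (hc : Continuous f)
    (hmom : Integrable fun x : EuclideanSpace ℝ (Fin n) => f x * ‖x‖ ^ 2) :
    (covMat f).PosSemidef := by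
  apply Matrix.PosSemidef.of_dotProduct_mulVec_nonneg
  · ext i j
    simp [cov_symm (f := f) i j]
  · intro v
    have h := (quad_int hdens hc hmom (Matrix.of fun i j => v i * v j)).2
    have h2 : star v ⬝ᵥ (covMat f).mulVec v = ∑ i, ∑ j, (Matrix.of fun i j => v i * v j) i j * covMat f i j := by
      simp only [dotProduct, Matrix.mulVec, Finset.mul_sum, Matrix.of_apply, Pi.star_apply, star_trivial]
      refine Finset.sum_congr rfl fun i _ => Finset.sum_congr rfl fun j _ => ?_
      ring
    rw [h2, ← h]
    apply integral_nonneg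
    intro x
    apply mul_nonneg (hdens.1 x)
    have : ∑ i, ∑ j, (x i - meanVec f i) * (Matrix.of fun i j => v i * v j) i j * (x j - meanVec f j)
        = (∑ i, (x i - meanVec f i) * v i) ^ 2 := by
      rw [sq, Finset.sum_mul_sum]
      refine Finset.sum_congr rfl fun i _ => Finset.sum_congr rfl fun j _ => ?_
      simp only [Matrix.of_apply]
      ring
    rw [this]
    positivity

lemma cov_trace_le (hdens : IsDensity f) (hc : Continuous f)
    (hmom : Integrable fun x : EuclideanSpace ℝ (Fin n) => f x * ‖x‖ ^ 2) :
    (covMat f).trace ≤ ∫ x, f x * ‖x‖ ^ 2 := by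
  have hsq : ∀ i, Integrable fun x : EuclideanSpace ℝ (Fin n) => f x * x i ^ 2 := fun i => by
    refine (int_prod hdens hc hmom 0 0 i i).congr (Filter.Eventually.of_forall fun x => ?_)
    simp only []
    ring
  have h1 : ∫ x, f x * ‖x‖ ^ 2 = ∑ i, ∫ x : EuclideanSpace ℝ (Fin n), f x * x i ^ 2 := by
    rw [← integral_finsetSum _ fun i _ => hsq i]
    congr 1
    funext x
    rw [EuclideanSpace.real_norm_sq_eq, Finset.mul_sum]
  rw [h1, Matrix.trace]
  refine Finset.sum_le_sum fun i _ => ?_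
  rw [Matrix.diag_apply, covMat, Matrix.of_apply]
  have h2 : ∀ x : EuclideanSpace ℝ (Fin n), f x * (x i - meanVec f i) * (x i - meanVec f i)
      = 1 * (f x * x i ^ 2) + (- 2 * meanVec f i) * (f x * x i) + meanVec f i ^ 2 * f x := fun x => by ring
  simp_rw [h2]
  have hl := int_lin hdens hc hmom i
  rw [integral_three (hsq i) hl hdens.2.1, hdens.2.2]
  have : ∫ x : EuclideanSpace ℝ (Fin n), f x * x i = meanVec f i := rfl
  rw [this]
  nlinarith [sq_nonneg (meanVec f i)]

lemma log_det_le (R : Matrix (Fin n) (Fin n) ℝ) (hR : R.PosSemidef) (hd : R.det ≠ 0) :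
    0 < R.det ∧ Real.log R.det ≤ R.trace - n := by
  have h1 := hR.1.det_eq_prod_eigenvalues
  have h2 := hR.1.trace_eq_sum_eigenvalues
  simp only [RCLike.ofReal_real_eq_id, id_eq] at h1 h2
  refine ⟨lt_of_le_of_ne hR.det_nonneg hd.symm, ?_⟩
  rw [h1] at hd
  have hne := Finset.prod_ne_zero_iff.1 hd
  have hpos : ∀ i, 0 < hR.1.eigenvalues i := fun i =>
    lt_of_le_of_ne (hR.eigenvalues_nonneg i) (hne i (Finset.mem_univ i)).symm
  rw [h1, h2, Real.log_prod (fun i hi => hne i hi)]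
  calc _ ≤ ∑ i, (hR.1.eigenvalues i - 1) := Finset.sum_le_sum fun i _ => Real.log_le_sub_one_of_pos (hpos i)
    _ = _ := by simp

lemma kl_bound {c₁ c₂ : ℝ} (hc₁ : 0 < c₁) (hc₂ : 0 ≤ c₂) (hdens : IsDensity f)
    (h : IsRegularDensity c₁ c₂ f)
    (hmom : Integrable fun x : EuclideanSpace ℝ (Fin n) => f x * ‖x‖ ^ 2) (S : ℝ)
    (hS : ∫ x, f x * ‖x‖ ^ 2 = S) :
    KLtoGauss f ≤ 2 * c₂ + n / 2 * |Real.log (π / (c₁ + c₂))| + n / 2 * Real.log (2 * π)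
      + (c₁ + c₂ + 1 / 2) * S := by
  have hc : Continuous f := h.2.1.continuous
  have hS0 : 0 ≤ S := hS ▸ integral_nonneg fun x => mul_nonneg (hdens.1 x) (by positivity)
  have hl2 : 0 ≤ Real.log (2 * π) := Real.log_nonneg (by nlinarith [Real.pi_gt_three])
  have hnn : 0 ≤ 2 * c₂ + n / 2 * |Real.log (π / (c₁ + c₂))| + n / 2 * Real.log (2 * π)
      + (c₁ + c₂ + 1 / 2) * S := by positivity
  set R := covMat f with hR
  rw [KLtoGauss, klDiv', ← hR]
  by_cases hd : R.det = 0
  · have : ∀ x, gaussDensity (meanVec f) R x = 0 := fun x => by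
      rw [gaussDensity, hd, Real.zero_rpow (by norm_num)]
      simp
    simpa [this] using hnn
  by_cases hgInt : Integrable fun x => f x * Real.log (f x / gaussDensity (meanVec f) R x)
  swap
  · rw [integral_undef hgInt]
    exact hnn
  obtain ⟨hdpos, hdlog⟩ := log_det_le R (cov_psd hdens hc hmom) hd
  have htr := cov_trace_le hdens hc hmom
  rw [hS, ← hR] at htr
  obtain ⟨hq1, hq2⟩ := quad_int hdens hc hmom R⁻¹
  have hq3 : ∑ i, ∑ j, R⁻¹ i j * covMat f i j = n := by
    have : (R⁻¹ * R).trace = n := by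
      rw [Matrix.nonsing_inv_mul _ (isUnit_iff_ne_zero.2 hd)]
      simp
    rw [← this, Matrix.trace]
    refine Finset.sum_congr rfl fun i _ => ?_
    rw [Matrix.diag_apply, Matrix.mul_apply]
    refine Finset.sum_congr rfl fun j _ => ?_
    rw [cov_symm]
  rw [hq3] at hq2
  set K : ℝ := Real.log (f 0) + c₂ + n / 2 * Real.log (2 * π) + 1 / 2 * Real.log R.det with hK
  have hb : ∀ x, f x * Real.log (f x / gaussDensity (meanVec f) R x) ≤
      K * f x + (c₁ + c₂) * (f x * ‖x‖ ^ 2) + 1 / 2 *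
        (f x * ∑ i, ∑ j, (x i - meanVec f i) * R⁻¹ i j * (x j - meanVec f j)) := by
    intro x
    have hx := h.1 x
    have h2p : (0:ℝ) < 2 * π := by positivity
    have h1 : Real.log (f x / gaussDensity (meanVec f) R x) = Real.log (f x)
        + n / 2 * Real.log (2 * π) + 1 / 2 * Real.log R.det + 1 / 2 *
        ∑ i, ∑ j, (x i - meanVec f i) * R⁻¹ i j * (x j - meanVec f j) := by
      have e1 : (2 * π) ^ (-(n : ℝ) / 2) ≠ 0 := by positivity
      have e2 : R.det ^ (-(1 : ℝ) / 2) ≠ 0 := by positivity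
      rw [gaussDensity, Real.log_div hx.ne' (mul_ne_zero (mul_ne_zero e1 e2) (Real.exp_ne_zero _)),
        Real.log_mul (mul_ne_zero e1 e2) (Real.exp_ne_zero _), Real.log_mul e1 e2, Real.log_exp,
        Real.log_rpow h2p, Real.log_rpow hdpos]
      ring
    have h3 := (abs_le.1 (log_lip hc₁ hc₂ h x)).2
    rw [h1]
    have := mul_le_mul_of_nonneg_left h3 hx.le
    rw [hK]
    linarith
  have hm := integral_mono hgInt (((hdens.2.1.const_mul K).add (hmom.const_mul (c₁ + c₂))).add
    (hq1.const_mul (1 / 2))) hb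
  refine hm.trans ?_
  refine (integral_three hdens.2.1 hmom hq1 K (c₁ + c₂) (1 / 2)).le.trans ?_
  rw [hdens.2.2, hS, hq2]
  have h0 := log_zero_le hc₁ hc₂ h hdens
  have hab := mul_le_mul_of_nonneg_left (neg_abs_le (Real.log (π / (c₁ + c₂))))
    (by positivity : (0 : ℝ) ≤ n / 2)
  rw [hK]
  linarith

end mom

lemma law_int {Ω : Type*} [MeasurableSpace Ω] (P : Measure Ω) 
    (X : ℕ → Ω → ℝ) (hXmeas : ∀ k, Measurable (X k)) {n : ℕ} {f : EuclideanSpace ℝ (Fin n) → ℝ}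
    (k : ℕ)
    (hlaw : Measure.map (pathVec X k n) P = volume.withDensity fun x => ENNReal.ofReal (f x))
    (hdens : IsDensity f) (hc : Continuous f)
    (hmom : Integrable fun x : EuclideanSpace ℝ (Fin n) => f x * ‖x‖ ^ 2) :
    Integrable (fun ω => ∑ i : Fin n, X (k + i) ω ^ 2) P ∧
    ∫ ω, ∑ i : Fin n, X (k + i) ω ^ 2 ∂P = ∫ x, f x * ‖x‖ ^ 2 := by
  have hpm : Measurable (pathVec X k n) := by
    unfold pathVec
    exact (WithLp.measurable_toLp 2 (Fin n → ℝ)).comp (measurable_pi_lambda _ fun i => hXmeas _)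
  have he : (fun ω => ∑ i : Fin n, X (k + i) ω ^ 2)
      = (fun x : EuclideanSpace ℝ (Fin n) => ‖x‖ ^ 2) ∘ pathVec X k n := by
    funext ω
    simp [EuclideanSpace.real_norm_sq_eq, pathVec]
  have hfm : Measurable fun x => ENNReal.ofReal (f x) := hc.measurable.ennreal_ofReal
  have hsm : ∀ μ : Measure (EuclideanSpace ℝ (Fin n)),
      AEStronglyMeasurable (fun x : EuclideanSpace ℝ (Fin n) => ‖x‖ ^ 2) μ :=
    fun μ => (by fun_prop : Continuous fun x : EuclideanSpace ℝ (Fin n) => ‖x‖ ^ 2).aestronglyMeasurable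
  constructor
  · rw [he, ← integrable_map_measure (hsm _) hpm.aemeasurable, hlaw,
      integrable_withDensity_iff_integrable_smul' hfm (by simp)]
    simpa [ENNReal.toReal_ofReal (hdens.1 _)] using hmom
  · rw [he]
    have := integral_map hpm.aemeasurable (hsm (Measure.map (pathVec X k n) P))
    simp only [Function.comp_def]
    rw [← this, hlaw, integral_withDensity_eq_integral_toReal_smul hfm (by simp)]
    simp [ENNReal.toReal_ofReal (hdens.1 _)]

theorem stmt0 {Ω : Type*} [MeasurableSpace Ω] (P : Measure Ω) [IsProbabilityMeasure P]
    (X : ℕ → Ω → ℝ) (hXmeas : ∀ k, Measurable (X k))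
    (f : (n : ℕ) → EuclideanSpace ℝ (Fin n) → ℝ)
    (hstat : ∀ n k, Measure.map (pathVec X k n) P = Measure.map (pathVec X 0 n) P)
    (hlaw : ∀ n, Measure.map (pathVec X 0 n) P
      = volume.withDensity fun x => ENNReal.ofReal (f n x))
    (hdens : ∀ n, IsDensity (f n))
    (hmom : ∀ n, Integrable fun x : EuclideanSpace ℝ (Fin n) => f n x * ‖x‖ ^ 2)
    (c₁ c₂ : ℝ) (hc₁ : 0 < c₁) (hc₂ : 0 ≤ c₂)
    (hreg : ∀ n, IsRegularDensity c₁ c₂ (f n)) :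
    ∃ c : ℝ, ∀ n : ℕ, 1 ≤ n → (1 / n : ℝ) * KLtoGauss (f n) ≤ c := by
  have hcont : ∀ n, Continuous (f n) := fun n => (hreg n).2.1.continuous
  have h1 : ∀ k, Integrable (fun ω => X k ω ^ 2) P ∧
      ∫ ω, X k ω ^ 2 ∂P = ∫ x, f 1 x * ‖x‖ ^ 2 := fun k => by
    simpa using law_int P X hXmeas k ((hstat 1 k).trans (hlaw 1)) (hdens 1) (hcont 1) (hmom 1)
  set M := ∫ x, f 1 x * ‖x‖ ^ 2 with hM
  have hS : ∀ n, ∫ x, f n x * ‖x‖ ^ 2 = n * M := fun n => by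
    rw [← (law_int P X hXmeas 0 (hlaw n) (hdens n) (hcont n) (hmom n)).2,
      integral_finsetSum _ fun i _ => (h1 _).1]
    simp [fun k => (h1 k).2]
  refine ⟨2 * c₂ + 1 / 2 * |Real.log (π / (c₁ + c₂))| + 1 / 2 * Real.log (2 * π)
      + (c₁ + c₂ + 1 / 2) * M, fun n hn => ?_⟩
  have hb := kl_bound hc₁ hc₂ (hdens n) (hreg n) (hmom n) _ (hS n)
  have hn1 : (1 : ℝ) ≤ n := by exact_mod_cast hn
  rw [one_div, inv_mul_le_iff₀ (by linarith)]
  nlinarith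

end
end

section
/- Let f^(n), n = 1, 2, …, be a sequence of log-concave probability density functions, f^(n) on ℝ^n, each with finite second moments, such that the second moments are uniformly bounded (i.e. there is M < ∞ with E[(X_k^n)²] ≤ M for all n and all coordinates k ∈ {1,…,n}, where X^n ∼ f^(n)) and such that every f^(n) is (c1,c2)-regular with constants c1 > 0, c2 ≥ 0 independent of n. Then there exists a finite constant c, independent of n, such that (1/n)·D(f^(n)) ≤ c for all n; in fact (1/n)·D(f^(n)) ≤ 2·c1·M + 2·c2·√M/√n for all n. -/
open MeasureTheory Real ProbabilityTheory
open scoped BigOperators ENNReal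

noncomputable section
open MeasureTheory Real ProbabilityTheory

/-- `g` is integrable with integral `v`. -/
def HI {n : ℕ} (g : EuclideanSpace ℝ (Fin n) → ℝ) (v : ℝ) : Prop :=
  Integrable g ∧ ∫ x, g x = v

lemma HI.add {n : ℕ} {g h : EuclideanSpace ℝ (Fin n) → ℝ} {v w : ℝ} (hg : HI g v) (hh : HI h w) :
    HI (fun x => g x + h x) (v + w) :=
  ⟨hg.1.add hh.1, by rw [integral_add hg.1 hh.1, hg.2, hh.2]⟩

lemma HI.sub {n : ℕ} {g h : EuclideanSpace ℝ (Fin n) → ℝ} {v w : ℝ} (hg : HI g v) (hh : HI h w) :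
    HI (fun x => g x - h x) (v - w) :=
  ⟨hg.1.sub hh.1, by rw [integral_sub hg.1 hh.1, hg.2, hh.2]⟩

lemma HI.cmul {n : ℕ} {g : EuclideanSpace ℝ (Fin n) → ℝ} {v : ℝ} (c : ℝ) (hg : HI g v) :
    HI (fun x => c * g x) (c * v) :=
  ⟨hg.1.const_mul c, by rw [integral_const_mul, hg.2]⟩

lemma HI.sum {n : ℕ} {ι : Type*} (s : Finset ι) {g : ι → EuclideanSpace ℝ (Fin n) → ℝ} {v : ι → ℝ}
    (hg : ∀ i, HI (g i) (v i)) :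
    HI (fun x => ∑ i ∈ s, g i x) (∑ i ∈ s, v i) :=
  ⟨integrable_finsetSum s fun i _ => (hg i).1, by
    rw [integral_finsetSum s fun i _ => (hg i).1]
    exact Finset.sum_congr rfl fun i _ => (hg i).2⟩

lemma HI.congr {n : ℕ} {g h : EuclideanSpace ℝ (Fin n) → ℝ} {v w : ℝ} (hg : HI g v)
    (e : ∀ x, h x = g x) (e' : w = v) : HI h w := by
  have : h = g := funext e
  subst this; subst e'; exact hg

lemma HI.mono {n : ℕ} {g h : EuclideanSpace ℝ (Fin n) → ℝ} {v w : ℝ} (hg : HI g v) (hh : HI h w)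
    (hle : ∀ x, g x ≤ h x) : v ≤ w := by
  rw [← hg.2, ← hh.2]; exact integral_mono hg.1 hh.1 hle

lemma HI.prod {n : ℕ} {p : Fin n → ℝ → ℝ} {v : Fin n → ℝ}
    (h : ∀ i, Integrable (p i) ∧ ∫ t, p i t = v i) :
    HI (fun x : EuclideanSpace ℝ (Fin n) => ∏ i, p i (x i)) (∏ i, v i) := by
  have hp := PiLp.volume_preserving_ofLp (Fin n)
  have he : MeasurableEmbedding (@WithLp.ofLp 2 (Fin n → ℝ)) :=
    (MeasurableEquiv.toLp 2 (Fin n → ℝ)).symm.measurableEmbedding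
  constructor
  · have := Integrable.fintype_prod_dep (μ := fun _ => volume) (fun i => (h i).1)
    exact (hp.integrable_comp_emb he (g := fun x : Fin n → ℝ => ∏ i, p i (x i))).2 this
  · have := hp.integral_comp he (fun x : Fin n → ℝ => ∏ i, p i (x i))
    rw [this, integral_fintype_prod_volume_eq_prod]
    exact Finset.prod_congr rfl fun i _ => (h i).2

/-- one-dimensional standard normal density -/
def w1 (t : ℝ) : ℝ := gaussianPDFReal 0 1 t

lemma w1_pos (t : ℝ) : 0 < w1 t := gaussianPDFReal_pos _ _ _ one_ne_zero

lemma w1_zero : Integrable w1 ∧ ∫ t, w1 t = 1 :=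
  ⟨integrable_gaussianPDFReal 0 1, integral_gaussianPDFReal_eq_one 0 one_ne_zero⟩

lemma w1_int (g : ℝ → ℝ) (hg : Integrable g (gaussianReal 0 1)) :
    Integrable fun t => w1 t * g t := by
  rw [gaussianReal_of_var_ne_zero _ one_ne_zero,
    integrable_withDensity_iff_integrable_smul' (measurable_gaussianPDF _ _)] at hg
  · simpa [w1, toReal_gaussianPDF] using hg
  · exact Filter.Eventually.of_forall fun x => gaussianPDF_lt_top

lemma w1_one : (Integrable fun t => w1 t * t) ∧ ∫ t, w1 t * t = 0 := by
  constructor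
  · exact w1_int (fun t => t) ((memLp_id_gaussianReal 1).integrable le_rfl)
  · have := integral_gaussianReal_eq_integral_smul (μ := 0) (v := 1) (f := fun t : ℝ => t) one_ne_zero
    rw [integral_id_gaussianReal] at this
    simpa [w1] using this.symm

lemma w1_two : (Integrable fun t => w1 t * t ^ 2) ∧ ∫ t, w1 t * t ^ 2 = 1 := by
  constructor
  · exact w1_int (fun t => t ^ 2) ((memLp_id_gaussianReal 2).integrable_sq)
  · have := integral_gaussianReal_eq_integral_smul (μ := 0) (v := 1) (f := fun t : ℝ => t ^ 2)
      one_ne_zero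
    have h2 := variance_fun_id_gaussianReal (μ := 0) (v := 1)
    rw [variance_eq_integral (by fun_prop)] at h2
    simp only [integral_id_gaussianReal, sub_zero] at h2
    rw [h2] at this
    simpa [w1] using this.symm

/-- standard normal density on `ℝⁿ` -/
def phi {n : ℕ} (z : EuclideanSpace ℝ (Fin n)) : ℝ := ∏ i, w1 (z i)

lemma phi_pos {n : ℕ} (z : EuclideanSpace ℝ (Fin n)) : 0 < phi z :=
  Finset.prod_pos fun i _ => w1_pos _

lemma phi_zero {n : ℕ} : HI (phi (n := n)) 1 :=
  (HI.prod (p := fun _ => w1) (v := fun _ => 1) fun _ => w1_zero).congr (fun _ => rfl) (by simp)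

lemma phi_one {n : ℕ} (i : Fin n) : HI (fun z : EuclideanSpace ℝ (Fin n) => phi z * z i) 0 := by
  refine (HI.prod (p := fun k t => w1 t * if k = i then t else 1)
    (v := fun k => if k = i then 0 else 1) fun k => ?_).congr (fun z => ?_) ?_
  · by_cases h : k = i
    · simpa [h] using w1_one
    · simpa [h] using w1_zero
  · rw [Finset.prod_mul_distrib]; simp [phi]
  · symm; exact Finset.prod_eq_zero (Finset.mem_univ i) (by simp)

lemma phi_two {n : ℕ} (i j : Fin n) :
    HI (fun z : EuclideanSpace ℝ (Fin n) => phi z * (z i * z j)) (if i = j then 1 else 0) := by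
  refine (HI.prod (p := fun k t => w1 t * ((if k = i then t else 1) * if k = j then t else 1))
    (v := fun k => if k = i then (if i = j then 1 else 0) else if k = j then 0 else 1)
    fun k => ?_).congr (fun z => ?_) ?_
  · by_cases h : k = i <;> by_cases h' : k = j
    · have : i = j := h ▸ h'
      simpa [h, this, sq] using w1_two
    · have : i ≠ j := h ▸ h'
      simpa [h, this] using w1_one
    · simpa [h', Ne.symm (h' ▸ h : j ≠ i), h'▸h] using w1_one
    · simpa [h, h'] using w1_zero
  · rw [Finset.prod_mul_distrib, Finset.prod_mul_distrib]; simp [phi]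
  · symm
    by_cases h : i = j
    · subst h
      simp only [if_true]
      exact Finset.prod_eq_one fun k _ => by by_cases hk : k = i <;> simp [hk]
    · rw [if_neg h]
      exact Finset.prod_eq_zero (Finset.mem_univ i) (by simp [h])

lemma phi_quad {n : ℕ} (b : ℝ) (a : Fin n → ℝ) :
    HI (fun z : EuclideanSpace ℝ (Fin n) => phi z * (b + ∑ j, a j * z j) ^ 2)
      (b ^ 2 + ∑ j, a j ^ 2) := by
  have h1 := (phi_zero (n := n)).cmul (b ^ 2)
  have h2 := (HI.sum Finset.univ fun j => (phi_one (n := n) j).cmul (a j)).cmul (2 * b)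
  have h3 := HI.sum Finset.univ fun j => HI.sum Finset.univ fun k =>
    (phi_two (n := n) j k).cmul (a j * a k)
  refine ((h1.add h2).add h3).congr (fun z => ?_) ?_
  · have e : (∑ j, a j * z j) ^ 2 = ∑ j, ∑ k, a j * a k * (z j * z k) := by
      rw [sq, Finset.sum_mul_sum]
      exact Finset.sum_congr rfl fun j _ => Finset.sum_congr rfl fun k _ => by ring
    have e2 : ∑ j, ∑ k, a j * a k * (phi z * (z j * z k))
        = phi z * ∑ j, ∑ k, a j * a k * (z j * z k) := by
      simp_rw [Finset.mul_sum]
      exact Finset.sum_congr rfl fun j _ => Finset.sum_congr rfl fun k _ => by ring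
    have e3 : ∑ j, a j * (phi z * z j) = phi z * ∑ j, a j * z j := by
      simp_rw [Finset.mul_sum]
      exact Finset.sum_congr rfl fun j _ => by ring
    rw [e2, e3, ← e]; ring
  · simp [sq]

lemma log_phi {n : ℕ} (z : EuclideanSpace ℝ (Fin n)) :
    Real.log (phi z) = -((n : ℝ) / 2 * Real.log (2 * π)) - (∑ i, z i ^ 2) / 2 := by
  have h1 : ∀ t, Real.log (w1 t) = - (Real.log (2 * π) / 2) - t ^ 2 / 2 := by
    intro t
    have : 0 < √(2 * π) := by positivity
    simp only [w1, gaussianPDFReal, NNReal.coe_one, mul_one, sub_zero]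
    rw [Real.log_mul (by positivity) (Real.exp_pos _).ne', Real.log_exp, Real.log_inv,
      Real.log_sqrt (by positivity)]
    ring
  rw [phi, Real.log_prod (fun i _ => (w1_pos _).ne')]
  simp_rw [h1]
  rw [Finset.sum_sub_distrib, ← Finset.sum_div]
  simp; ring

lemma supergrad {n : ℕ} {f : EuclideanSpace ℝ (Fin n) → ℝ} (hpos : ∀ x, 0 < f x)
    (hd : Differentiable ℝ f) (hlc : LogConcaveFn f) (x u : EuclideanSpace ℝ (Fin n)) :
    Real.log (f x) - Real.log (f u) ≤
      ∑ i, (gradient (fun y => Real.log (f y)) u) i * (x i - u i) := by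
  set l : EuclideanSpace ℝ (Fin n) → ℝ := fun y => Real.log (f y) with hl
  have hconc : ConcaveOn ℝ Set.univ (fun t : ℝ => l (u + t • (x - u))) := by
    refine ⟨convex_univ, fun s _ t _ a b ha hb hab => ?_⟩
    have h := hlc (u + s • (x - u)) (u + t • (x - u)) a ha (by linarith)
    have hb' : 1 - a = b := by linarith
    have e : a • (u + s • (x - u)) + (1 - a) • (u + t • (x - u))
        = u + (a • s + b • t) • (x - u) := by
      subst hb'
      simp only [smul_eq_mul]
      module
    rw [e, hb'] at h
    have h2 := Real.log_le_log (mul_pos (Real.rpow_pos_of_pos (hpos _) _)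
      (Real.rpow_pos_of_pos (hpos _) _)) h
    rw [Real.log_mul (Real.rpow_pos_of_pos (hpos _) _).ne' (Real.rpow_pos_of_pos (hpos _) _).ne',
      Real.log_rpow (hpos _), Real.log_rpow (hpos _)] at h2
    simpa [hl] using h2
  have hdl : DifferentiableAt ℝ l u := (hd u).log (hpos u).ne'
  have hg := hdl.hasGradientAt.hasFDerivAt
  have hline : HasDerivAt (fun t : ℝ => u + t • (x - u)) (x - u) 0 := by
    simpa using ((hasDerivAt_id (0 : ℝ)).smul_const (x - u)).const_add u
  have hder : HasDerivAt (fun t : ℝ => l (u + t • (x - u)))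
      (inner ℝ (gradient l u) (x - u)) 0 := by
    have hg' : HasFDerivAt l (InnerProductSpace.toDual ℝ _ (gradient l u))
      (u + (0 : ℝ) • (x - u)) := by simpa using hg
    exact hg'.comp_hasDerivAt (0 : ℝ) hline
  have hs := hconc.slope_le_of_hasDerivAt (Set.mem_univ 0) (Set.mem_univ 1) zero_lt_one hder
  simp only [slope_def_field, one_smul, zero_smul, add_zero, sub_zero, div_one] at hs
  rw [add_sub_cancel] at hs
  refine hs.trans (le_of_eq ?_)
  rw [PiLp.inner_apply]
  exact Finset.sum_congr rfl fun i _ => by simp [mul_comm]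

/-- affine change of variables -/
lemma HI.affine {n : ℕ} {f : EuclideanSpace ℝ (Fin n) → ℝ} {v : ℝ} (hf : HI f v)
    (A : Matrix (Fin n) (Fin n) ℝ) (hA : A.det ≠ 0) (m : EuclideanSpace ℝ (Fin n)) :
    HI (fun z => |A.det| * f (m + A.toLpLin 2 2 z)) v := by
  let T : EuclideanSpace ℝ (Fin n) →L[ℝ] EuclideanSpace ℝ (Fin n) :=
    LinearMap.toContinuousLinearMap (A.toLpLin 2 2)
  have hdet : LinearMap.det (A.toLpLin 2 2) ≠ 0 := by rwa [LinearMap.det_toLpLin]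
  let e := LinearEquiv.ofIsUnitDet (f := A.toLpLin 2 2) (v := (PiLp.basisFun 2 ℝ (Fin n)))
    (v' := (PiLp.basisFun 2 ℝ (Fin n))) (by rw [LinearMap.det_toMatrix]; exact hdet.isUnit)
  have hbij : Function.Bijective (fun z => m + A.toLpLin 2 2 z) :=
    (AddGroup.addLeft_bijective m).comp e.bijective
  have hder : ∀ x ∈ Set.univ, HasFDerivWithinAt (fun z => m + A.toLpLin 2 2 z) T Set.univ x :=
    fun x _ => (T.hasFDerivAt.const_add m).hasFDerivWithinAt
  have hTd : T.det = A.det := by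
    rw [← LinearMap.det_toLpLin 2 A]; rfl
  have h1 := integrableOn_image_iff_integrableOn_abs_det_fderiv_smul volume MeasurableSet.univ hder
    hbij.injective.injOn f
  have h2 := integral_image_eq_integral_abs_det_fderiv_smul volume MeasurableSet.univ hder
    hbij.injective.injOn f
  rw [Set.image_univ, hbij.surjective.range_eq, hTd] at h1 h2
  simp only [integrableOn_univ, setIntegral_univ, smul_eq_mul] at h1 h2
  exact ⟨h1.1 hf.1, h2 ▸ hf.2⟩

section moments

variable {n : ℕ} {f : EuclideanSpace ℝ (Fin n) → ℝ}

lemma dens_HI (h : IsDensity f) : HI f 1 := h.2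

lemma m2 (h : IsDensity f) (hd : Continuous f)
    (hmom : Integrable fun x : EuclideanSpace ℝ (Fin n) => f x * ‖x‖ ^ 2) (i j : Fin n) :
    Integrable fun x : EuclideanSpace ℝ (Fin n) => f x * (x i * x j) := by
  refine hmom.mono' (by fun_prop) (Filter.Eventually.of_forall fun x => ?_)
  rw [norm_mul, Real.norm_of_nonneg (h.1 x), norm_mul, sq]
  have := h.1 x
  gcongr
  · exact PiLp.norm_apply_le x i
  · exact PiLp.norm_apply_le x j

lemma m1 (h : IsDensity f) (hd : Continuous f)
    (hmom : Integrable fun x : EuclideanSpace ℝ (Fin n) => f x * ‖x‖ ^ 2) (i : Fin n) :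
    HI (fun x : EuclideanSpace ℝ (Fin n) => f x * x i) (meanVec f i) := by
  refine ⟨(h.2.1.add hmom).mono' (by fun_prop) (Filter.Eventually.of_forall fun x => ?_), rfl⟩
  rw [norm_mul, Real.norm_of_nonneg (h.1 x)]
  have h1 := h.1 x
  have h2 := PiLp.norm_apply_le x i
  have h3 : ‖x i‖ ≤ 1 + ‖x‖ ^ 2 := by nlinarith [sq_nonneg (‖x‖ - 1), norm_nonneg x]
  calc f x * ‖x i‖ ≤ f x * (1 + ‖x‖ ^ 2) := by gcongr
    _ = _ := by simp; ring

lemma m2c (h : IsDensity f) (hd : Continuous f)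
    (hmom : Integrable fun x : EuclideanSpace ℝ (Fin n) => f x * ‖x‖ ^ 2) (i j : Fin n) :
    HI (fun x : EuclideanSpace ℝ (Fin n) => f x * ((x i - meanVec f i) * (x j - meanVec f j)))
      (covMat f i j) := by
  constructor
  · refine ((((m2 h hd hmom i j).sub ((m1 h hd hmom i).1.mul_const (meanVec f j))).sub
      ((m1 h hd hmom j).1.mul_const (meanVec f i))).add
      (h.2.1.mul_const (meanVec f i * meanVec f j))).congr
      (Filter.Eventually.of_forall fun x => ?_)
    simp; ring
  · simp [covMat, mul_assoc]

lemma cov_diag (h : IsDensity f) (hd : Continuous f)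
    (hmom : Integrable fun x : EuclideanSpace ℝ (Fin n) => f x * ‖x‖ ^ 2) (i : Fin n) :
    meanVec f i ^ 2 + covMat f i i = ∫ x : EuclideanSpace ℝ (Fin n), f x * (x i) ^ 2 := by
  have h1 := m2c h hd hmom i i
  have h2 := (m1 h hd hmom i).cmul (2 * meanVec f i)
  have h3 := (dens_HI h).cmul (meanVec f i ^ 2)
  have := (((h1.add h2).sub h3).congr (h := fun x => f x * (x i) ^ 2) (fun x => by ring) rfl).2
  rw [this]; ring

lemma cov_posDef (h : IsDensity f) (hpos : ∀ x, 0 < f x) (hd : Continuous f)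
    (hmom : Integrable fun x : EuclideanSpace ℝ (Fin n) => f x * ‖x‖ ^ 2) :
    (covMat f).PosDef := by
  refine Matrix.PosDef.of_dotProduct_mulVec_pos ?_ fun a ha => ?_
  · ext i j
    simp only [Matrix.conjTranspose_apply, covMat, Matrix.of_apply, star_trivial]
    congr 1; ext x; ring
  · have h1 := HI.sum Finset.univ fun i => HI.sum Finset.univ fun j =>
      (m2c h hd hmom i j).cmul (a i * a j)
    have h2 : HI (fun x : EuclideanSpace ℝ (Fin n) => f x * (∑ i, a i * (x i - meanVec f i)) ^ 2)
        (star a ⬝ᵥ (covMat f).mulVec a) := by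
      refine h1.congr (fun x => ?_) ?_
      · rw [sq, Finset.sum_mul_sum, Finset.mul_sum]
        refine Finset.sum_congr rfl fun i _ => ?_
        rw [Finset.mul_sum]
        exact Finset.sum_congr rfl fun j _ => by ring
      · simp only [dotProduct, Matrix.mulVec, star_trivial, Finset.mul_sum]
        exact Finset.sum_congr rfl fun i _ => Finset.sum_congr rfl fun j _ => by ring
    rw [← h2.2]
    have hc : Continuous fun x : EuclideanSpace ℝ (Fin n) =>
      f x * (∑ i, a i * (x i - meanVec f i)) ^ 2 := by fun_prop
    rw [integral_pos_iff_support_of_nonneg (fun x => mul_nonneg (h.1 x) (sq_nonneg _)) h2.1]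
    refine (hc.isOpen_support).measure_pos _ ⟨WithLp.toLp 2 (fun i => meanVec f i + a i), ?_⟩
    simp only [Function.mem_support, add_sub_cancel_left]
    have : 0 < ∑ i, a i * a i := by
      obtain ⟨i, hi⟩ := Function.ne_iff.1 ha
      exact Finset.sum_pos' (fun j _ => mul_self_nonneg _) ⟨i, Finset.mem_univ i,
        mul_self_pos.2 hi⟩
    exact (mul_pos (hpos _) (pow_pos this 2)).ne'

end moments

open scoped MatrixOrder Matrix.Norms.L2Operator in
lemma exists_factor {n : ℕ} {R : Matrix (Fin n) (Fin n) ℝ} (hR : R.PosSemidef) :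
    ∃ A : Matrix (Fin n) (Fin n) ℝ, R = A * A.transpose := by
  obtain ⟨B, hB⟩ := CStarAlgebra.nonneg_iff_eq_star_mul_self.mp hR.nonneg
  refine ⟨B.transpose, ?_⟩
  rw [hB, Matrix.transpose_transpose, Matrix.star_eq_conjTranspose,
    Matrix.conjTranspose_eq_transpose_of_trivial]

lemma core {n : ℕ} {f : EuclideanSpace ℝ (Fin n) → ℝ} (hn : 1 ≤ n)
    (hdens : IsDensity f) (hlc : LogConcaveFn f)
    (hmom : Integrable fun x : EuclideanSpace ℝ (Fin n) => f x * ‖x‖ ^ 2)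
    (M : ℝ) (hM : ∀ k : Fin n, (∫ x : EuclideanSpace ℝ (Fin n), f x * (x k) ^ 2) ≤ M)
    (c₁ c₂ : ℝ) (hc₁ : 0 < c₁) (hc₂ : 0 ≤ c₂) (hreg : IsRegularDensity c₁ c₂ f) :
    0 < M ∧ KLtoGauss f ≤ c₁ * (n * M) + c₂ * √(n * M) := by
  obtain ⟨hpos, hdiff, hgrad⟩ := hreg
  have hcont := hdiff.continuous
  set m := meanVec f with hm
  set R := covMat f with hRdef
  have hR : R.PosDef := cov_posDef hdens hpos hcont hmom
  have hdiag := cov_diag hdens hcont hmom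
  have hn0 : (0 : ℝ) < n := by exact_mod_cast hn
  have hMpos : 0 < M := by
    let k : Fin n := ⟨0, hn⟩
    have h1 := hdiag k
    have h2 : 0 < R k k := hR.diag_pos
    have h3 := hM k
    nlinarith [sq_nonneg (m k)]
  refine ⟨hMpos, ?_⟩
  set s := √(n * M) with hs
  have hspos : 0 < s := Real.sqrt_pos.2 (by positivity)
  have hss : s * s = n * M := Real.mul_self_sqrt (by positivity)
  have hdetR := hR.det_pos
  by_cases hint : Integrable fun x => f x * Real.log (f x / gaussDensity m R x)
  swap
  · have : KLtoGauss f = 0 := integral_undef hint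
    rw [this]; positivity
  -- the Gaussian side
  have hlogg : ∀ x, Real.log (gaussDensity m R x) = -(n / 2 * Real.log (2 * π))
      - Real.log R.det / 2 - (1 / 2) * ∑ i, ∑ j, (x i - m i) * R⁻¹ i j * (x j - m j) := by
    intro x
    have h2pi : (0 : ℝ) < 2 * π := by positivity
    rw [gaussDensity, Real.log_mul (mul_pos (Real.rpow_pos_of_pos h2pi _)
      (Real.rpow_pos_of_pos hdetR _)).ne' (Real.exp_pos _).ne',
      Real.log_mul (Real.rpow_pos_of_pos h2pi _).ne' (Real.rpow_pos_of_pos hdetR _).ne',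
      Real.log_exp, Real.log_rpow h2pi, Real.log_rpow hdetR]
    ring
  have hgpos : ∀ x, 0 < gaussDensity m R x := fun x => by
    have h2pi : (0 : ℝ) < 2 * π := by positivity
    exact mul_pos (mul_pos (Real.rpow_pos_of_pos h2pi _)
      (Real.rpow_pos_of_pos hdetR _)) (Real.exp_pos _)
  have hquad : HI (fun x : EuclideanSpace ℝ (Fin n) =>
      f x * ∑ i, ∑ j, (x i - m i) * R⁻¹ i j * (x j - m j)) n := by
    have h1 := HI.sum Finset.univ fun i => HI.sum Finset.univ fun j =>
      (m2c hdens hcont hmom i j).cmul (R⁻¹ i j)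
    refine h1.congr (fun x => ?_) ?_
    · rw [Finset.mul_sum]
      refine Finset.sum_congr rfl fun i _ => ?_
      rw [Finset.mul_sum]
      exact Finset.sum_congr rfl fun j _ => by ring
    · have e : R⁻¹ * R = 1 := Matrix.nonsing_inv_mul R hdetR.ne'.isUnit
      have e2 : (R⁻¹ * R).trace = n := by rw [e]; simp
      rw [← e2, Matrix.trace]
      refine Finset.sum_congr rfl fun i _ => ?_
      rw [Matrix.diag_apply, Matrix.mul_apply]
      refine Finset.sum_congr rfl fun j _ => ?_
      have : R j i = R i j := by simpa using hR.1.apply i j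
      rw [this]
  have hlg : HI (fun x => f x * Real.log (gaussDensity m R x))
      ((-(n / 2 * Real.log (2 * π)) - Real.log R.det / 2) * 1 - 1 / 2 * n) := by
    refine (((dens_HI hdens).cmul _).sub (hquad.cmul (1 / 2))).congr (fun x => ?_) rfl
    rw [hlogg]; ring
  have hkl : HI (fun x => f x * Real.log (f x / gaussDensity m R x)) (KLtoGauss f) := ⟨hint, rfl⟩
  have hL := (hkl.add hlg).congr (h := fun x => f x * Real.log (f x)) (fun x => by
    rw [Real.log_div (hpos x).ne' (hgpos x).ne']; ring) rfl
  set L := KLtoGauss f + ((-(n / 2 * Real.log (2 * π)) - Real.log R.det / 2) * 1 - 1 / 2 * n)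
    with hLdef
  -- pointwise lower bound of log f
  let mv : EuclideanSpace ℝ (Fin n) := WithLp.toLp 2 m
  have hlow : ∀ u, L - (c₁ * ‖u‖ + c₂) * ‖u - mv‖ ≤ Real.log (f u) := by
    intro u
    set G := gradient (fun y => Real.log (f y)) u with hG
    have h1 := hL.sub ((dens_HI hdens).cmul (Real.log (f u)))
    have h2 := HI.sum Finset.univ fun i =>
      ((m1 hdens hcont hmom i).sub ((dens_HI hdens).cmul (u i))).cmul (G i)
    have h3 := h1.mono h2 fun x => by
      have := mul_le_mul_of_nonneg_left (supergrad hpos hdiff hlc x u) (hpos x).le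
      rw [Finset.mul_sum] at this
      calc _ = f x * (Real.log (f x) - Real.log (f u)) := by ring
        _ ≤ _ := this
        _ = _ := Finset.sum_congr rfl fun i _ => by ring
    have h4 : ∑ i, G i * (meanVec f i - u i * 1) = inner ℝ G (mv - u) := by
      rw [PiLp.inner_apply]
      exact Finset.sum_congr rfl fun i _ => by simp [mv, hm, mul_comm]
    rw [h4] at h3
    have h5 := real_inner_le_norm G (mv - u)
    have h6 := mul_le_mul_of_nonneg_right (hgrad u) (norm_nonneg (mv - u))
    rw [norm_sub_rev u mv]
    linarith
  have hlow2 : ∀ u, L - (c₁ / 2 * ‖u‖ ^ 2 + (c₁ / 2 + c₂ / (2 * s)) * ‖u - mv‖ ^ 2 + c₂ * s / 2)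
      ≤ Real.log (f u) := by
    intro u
    refine le_trans ?_ (hlow u)
    have h1 : ‖u‖ * ‖u - mv‖ ≤ (‖u‖ ^ 2 + ‖u - mv‖ ^ 2) / 2 := by
      nlinarith [sq_nonneg (‖u‖ - ‖u - mv‖)]
    have h2 : ‖u - mv‖ ≤ s / 2 + ‖u - mv‖ ^ 2 / (2 * s) := by
      have e : s / 2 + ‖u - mv‖ ^ 2 / (2 * s) - ‖u - mv‖ = (s - ‖u - mv‖) ^ 2 / (2 * s) := by
        field_simp; ring
      have : 0 ≤ (s - ‖u - mv‖) ^ 2 / (2 * s) := by positivity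
      linarith
    have h3 := mul_le_mul_of_nonneg_left h1 hc₁.le
    have h4 := mul_le_mul_of_nonneg_left h2 hc₂
    have e : c₂ / (2 * s) * ‖u - mv‖ ^ 2 = c₂ * (‖u - mv‖ ^ 2 / (2 * s)) := by ring
    linarith
  -- factorization of the covariance
  obtain ⟨A, hA⟩ := exists_factor hR.posSemidef
  have hdA : R.det = A.det ^ 2 := by rw [hA, Matrix.det_mul, Matrix.det_transpose, sq]
  have hA0 : A.det ≠ 0 := fun h => by rw [hdA, h] at hdetR; simp at hdetR
  have hRii : ∀ i, R i i = ∑ j, A i j ^ 2 := fun i => by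
    rw [hA, Matrix.mul_apply]
    exact Finset.sum_congr rfl fun j _ => by rw [Matrix.transpose_apply, sq]
  have hTi : ∀ (z : EuclideanSpace ℝ (Fin n)) i, (A.toLpLin 2 2 z) i = ∑ j, A i j * z j :=
    fun z i => by simp [Matrix.ofLp_toLpLin, Matrix.mulVec, dotProduct]
  have hU : HI (fun z => phi z * ‖mv + A.toLpLin 2 2 z‖ ^ 2) (∑ i, (m i ^ 2 + R i i)) := by
    refine (HI.sum Finset.univ fun i => phi_quad (m i) (A i)).congr (fun z => ?_) ?_
    · rw [EuclideanSpace.real_norm_sq_eq, Finset.mul_sum]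
      exact Finset.sum_congr rfl fun i _ => by rw [PiLp.add_apply, hTi]
    · exact Finset.sum_congr rfl fun i _ => by rw [hRii]
  have hV : HI (fun z => phi z * ‖A.toLpLin 2 2 z‖ ^ 2) (∑ i, R i i) := by
    refine (HI.sum Finset.univ fun i => phi_quad 0 (A i)).congr (fun z => ?_) ?_
    · rw [EuclideanSpace.real_norm_sq_eq, Finset.mul_sum]
      exact Finset.sum_congr rfl fun i _ => by rw [hTi, zero_add]
    · exact Finset.sum_congr rfl fun i _ => by rw [hRii]; ring
  have hZ : HI (fun z : EuclideanSpace ℝ (Fin n) => phi z * ∑ i, z i ^ 2) n := by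
    refine (HI.sum Finset.univ fun i => phi_two i i).congr (fun z => ?_) ?_
    · rw [Finset.mul_sum]
      exact Finset.sum_congr rfl fun i _ => by ring
    · simp
  have hUle : ∑ i, (m i ^ 2 + R i i) ≤ n * M := by
    calc _ ≤ ∑ _i : Fin n, M := Finset.sum_le_sum fun i _ => (hdiag i).le.trans (hM i)
      _ = n * M := by simp
  have hVle : ∑ i, R i i ≤ n * M :=
    (Finset.sum_le_sum fun i _ => by linarith [sq_nonneg (m i)]).trans hUle
  -- Gibbs inequality
  have hleft := ((((phi_zero (n := n)).cmul
    (L - c₂ * s / 2 + Real.log |A.det| + n / 2 * Real.log (2 * π))).sub (hU.cmul (c₁ / 2))).sub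
    (hV.cmul (c₁ / 2 + c₂ / (2 * s)))).add (hZ.cmul (1 / 2))
  have hright := ((dens_HI hdens).affine A hA0 mv).sub (phi_zero (n := n))
  have hfin := hleft.mono hright fun z => by
    have hp := phi_pos z
    have hAp : 0 < |A.det| := abs_pos.2 hA0
    have hr : 0 < |A.det| * f (mv + A.toLpLin 2 2 z) / phi z :=
      div_pos (mul_pos hAp (hpos _)) hp
    have h1 := Real.log_le_sub_one_of_pos hr
    rw [Real.log_div (mul_pos hAp (hpos _)).ne' hp.ne', Real.log_mul hAp.ne' (hpos _).ne',
      log_phi] at h1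
    have h2 := hlow2 (mv + A.toLpLin 2 2 z)
    rw [add_sub_cancel_left] at h2
    have h3 := mul_le_mul_of_nonneg_left (h1) hp.le
    have h4 := mul_le_mul_of_nonneg_left h2 hp.le
    have e : phi z * (|A.det| * f (mv + A.toLpLin 2 2 z) / phi z - 1)
        = |A.det| * f (mv + A.toLpLin 2 2 z) - phi z := by
      field_simp
    rw [e] at h3
    linarith
  have hlogdet : Real.log |A.det| = Real.log R.det / 2 := by
    rw [hdA, Real.log_abs, Real.log_pow]; push_cast; ring
  rw [hlogdet] at hfin
  have h1 := mul_le_mul_of_nonneg_left hUle (by positivity : 0 ≤ c₁ / 2)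
  have h2 := mul_le_mul_of_nonneg_left hVle (by positivity : 0 ≤ c₁ / 2 + c₂ / (2 * s))
  have e : c₂ / (2 * s) * (n * M) = c₂ * s / 2 := by
    rw [← hss]; field_simp
  linarith

end

noncomputable section
open MeasureTheory Real ProbabilityTheory

theorem stmt4 (f : (n : ℕ) → EuclideanSpace ℝ (Fin n) → ℝ)
    (hdens : ∀ n, IsDensity (f n)) (hlc : ∀ n, LogConcaveFn (f n))
    (hmom : ∀ n, Integrable fun x : EuclideanSpace ℝ (Fin n) => f n x * ‖x‖ ^ 2)
    (M : ℝ)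
    (hM : ∀ n, ∀ k : Fin n, (∫ x : EuclideanSpace ℝ (Fin n), f n x * (x k) ^ 2) ≤ M)
    (c₁ c₂ : ℝ) (hc₁ : 0 < c₁) (hc₂ : 0 ≤ c₂)
    (hreg : ∀ n, IsRegularDensity c₁ c₂ (f n)) :
    (∃ c : ℝ, ∀ n : ℕ, 1 ≤ n → (1 / n : ℝ) * KLtoGauss (f n) ≤ c) ∧
      ∀ n : ℕ, 1 ≤ n → (1 / n : ℝ) * KLtoGauss (f n)
        ≤ 2 * c₁ * M + 2 * c₂ * Real.sqrt M / Real.sqrt n := by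
  have key : ∀ n : ℕ, 1 ≤ n → (1 / n : ℝ) * KLtoGauss (f n)
        ≤ 2 * c₁ * M + 2 * c₂ * Real.sqrt M / Real.sqrt n := by
    intro n hn
    obtain ⟨hMp, h⟩ := core hn (hdens n) (hlc n) (hmom n) M (hM n) c₁ c₂ hc₁ hc₂ (hreg n)
    have hn0 : (0 : ℝ) < n := by exact_mod_cast hn
    have hsn : 0 < √(n : ℝ) := Real.sqrt_pos.2 hn0
    have e : (1 / n : ℝ) * (c₁ * (n * M) + c₂ * √(n * M)) = c₁ * M + c₂ * √M / √n := by
      rw [Real.sqrt_mul hn0.le]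
      have : (n : ℝ) = √n * √n := (Real.mul_self_sqrt hn0.le).symm
      have h2 : √(n : ℝ) / n = 1 / √n := by
        rw [div_eq_div_iff hn0.ne' hsn.ne']; linarith
      calc _ = c₁ * M * (n / n) + c₂ * √M * (√n / n) := by ring
        _ = _ := by rw [div_self hn0.ne', h2]; ring
    have h1 := mul_le_mul_of_nonneg_left h (by positivity : (0 : ℝ) ≤ 1 / n)
    rw [e] at h1
    have h2 : 0 ≤ c₁ * M := by positivity
    have h3 : 0 ≤ c₂ * √M / √n := by positivity
    have e2 : 2 * c₂ * √M / √n = 2 * (c₂ * √M / √n) := by ring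
    rw [e2]
    linarith
  refine ⟨⟨2 * c₁ * M + 2 * c₂ * Real.sqrt M, fun n hn => (key n hn).trans ?_⟩, key⟩
  have h1 : (1 : ℝ) ≤ √n := Real.one_le_sqrt.2 (by exact_mod_cast hn)
  have := div_le_self (by positivity : 0 ≤ 2 * c₂ * √M) h1
  linarith

end
end

section
/- Let (U, V) be jointly distributed random vectors in ℝ^n (an arbitrary coupling) with finite second moments E[‖U‖²] < ∞ and E[‖V‖²] < ∞, and suppose the marginal density p_V of V is (c1,c2)-regular. Then E[ |log p_V(V) − log p_V(U)| ] ≤ ((c1/2)·√(E[‖U‖²]) + (c1/2)·√(E[‖V‖²]) + c2) · √(E[‖U − V‖²]). -/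
open MeasureTheory Real ProbabilityTheory
open scoped BigOperators ENNReal

noncomputable section
open MeasureTheory Real ProbabilityTheory

lemma stmt7_pointwise {n : ℕ} (c₁ c₂ : ℝ)
    (f : EuclideanSpace ℝ (Fin n) → ℝ) (hc₁ : 0 < c₁) (h : IsRegularDensity c₁ c₂ f)
    (u v : EuclideanSpace ℝ (Fin n)) :
    |Real.log (f v) - Real.log (f u)| ≤ (c₁ / 2 * (‖u‖ + ‖v‖) + c₂) * ‖u - v‖ := by
  obtain ⟨hpos, hd, hg⟩ := h
  have hL : ∀ x, DifferentiableAt ℝ (fun y => Real.log (f y)) x := fun x =>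
    (hd x).log (hpos x).ne'
  set L : EuclideanSpace ℝ (Fin n) → ℝ := fun y => Real.log (f y) with hLdef
  have hline : ∀ t : ℝ, HasDerivAt (fun t : ℝ => u + t • (v - u)) (v - u) t := fun t => by
    simpa using ((hasDerivAt_id t).smul_const (v - u)).const_add u
  have hder : ∀ t : ℝ, HasDerivAt (fun t : ℝ => L (u + t • (v - u)) - L u)
      (fderiv ℝ L (u + t • (v - u)) (v - u)) t := fun t =>
    ((hL (u + t • (v - u))).hasFDerivAt.comp_hasDerivAt t (hline t)).sub_const _
  have hB : ∀ t : ℝ, HasDerivAt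
      (fun t : ℝ => ((c₁ * ‖u‖ + c₂) * t + c₁ * (‖v‖ - ‖u‖) / 2 * t ^ 2) * ‖u - v‖)
      ((c₁ * ((1 - t) * ‖u‖ + t * ‖v‖) + c₂) * ‖u - v‖) t := fun t => by
    have h1 := (((hasDerivAt_id t).const_mul (c₁ * ‖u‖ + c₂)).add
      ((hasDerivAt_pow 2 t).const_mul (c₁ * (‖v‖ - ‖u‖) / 2))).mul_const ‖u - v‖
    refine HasDerivAt.congr_deriv h1 ?_
    push_cast
    ring
  have key := image_norm_le_of_norm_deriv_right_le_deriv_boundary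
    (f := fun t : ℝ => L (u + t • (v - u)) - L u)
    (f' := fun t => fderiv ℝ L (u + t • (v - u)) (v - u)) (a := 0) (b := 1)
    (fun t _ => (hder t).continuousAt.continuousWithinAt)
    (fun t _ => (hder t).hasDerivWithinAt)
    (B := fun t : ℝ => ((c₁ * ‖u‖ + c₂) * t + c₁ * (‖v‖ - ‖u‖) / 2 * t ^ 2) * ‖u - v‖)
    (B' := fun t => (c₁ * ((1 - t) * ‖u‖ + t * ‖v‖) + c₂) * ‖u - v‖)
    (by simp) hB (by
      intro t ht
      have hgn : ‖fderiv ℝ L (u + t • (v - u))‖ ≤ c₁ * ‖u + t • (v - u)‖ + c₂ := by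
        have := hg (u + t • (v - u))
        rwa [gradient, LinearIsometryEquiv.norm_map] at this
      have hn : ‖u + t • (v - u)‖ ≤ (1 - t) * ‖u‖ + t * ‖v‖ := by
        have e : u + t • (v - u) = (1 - t) • u + t • v := by module
        rw [e]
        refine (norm_add_le _ _).trans ?_
        rw [norm_smul, norm_smul, Real.norm_of_nonneg ht.1,
          Real.norm_of_nonneg (by linarith [ht.2] : (0:ℝ) ≤ 1 - t)]
      refine (ContinuousLinearMap.le_opNorm _ _).trans ?_
      rw [norm_sub_rev v u]
      have := mul_le_mul_of_nonneg_left hn hc₁.le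
      gcongr
      linarith)
    (x := 1) ⟨zero_le_one, le_rfl⟩
  simp only [one_smul, add_sub_cancel, Real.norm_eq_abs] at key
  refine key.trans (le_of_eq ?_)
  ring

lemma stmt7_cs {Ω : Type*} [MeasurableSpace Ω] (P : Measure Ω) (f g : Ω → ℝ)
    (hf0 : ∀ x, 0 ≤ f x) (hg0 : ∀ x, 0 ≤ g x) (hf : MemLp f 2 P) (hg : MemLp g 2 P) :
    ∫ x, f x * g x ∂P ≤ √(∫ x, f x ^ 2 ∂P) * √(∫ x, g x ^ 2 ∂P) := by
  have := integral_mul_le_Lp_mul_Lq_of_nonneg (μ := P) Real.HolderConjugate.two_two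
    (Filter.Eventually.of_forall hf0) (Filter.Eventually.of_forall hg0)
    (by simpa using hf) (by simpa using hg)
  simpa [Real.sqrt_eq_rpow] using this

theorem stmt7 {Ω : Type*} [MeasurableSpace Ω] (P : Measure Ω) [IsProbabilityMeasure P]
    {n : ℕ} (U V : Ω → EuclideanSpace ℝ (Fin n)) (hU : Measurable U) (hV : Measurable V)
    (hU2 : Integrable (fun ω => ‖U ω‖ ^ 2) P) (hV2 : Integrable (fun ω => ‖V ω‖ ^ 2) P)
    (pV : EuclideanSpace ℝ (Fin n) → ℝ)
    (hlawV : Measure.map V P = volume.withDensity fun x => ENNReal.ofReal (pV x))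
    (c₁ c₂ : ℝ) (hc₁ : 0 < c₁) (hc₂ : 0 ≤ c₂) (hreg : IsRegularDensity c₁ c₂ pV) :
    ∫ ω, |Real.log (pV (V ω)) - Real.log (pV (U ω))| ∂P ≤
      (c₁ / 2 * Real.sqrt (∫ ω, ‖U ω‖ ^ 2 ∂P) + c₁ / 2 * Real.sqrt (∫ ω, ‖V ω‖ ^ 2 ∂P) + c₂)
        * Real.sqrt (∫ ω, ‖U ω - V ω‖ ^ 2 ∂P) := by
  have mU : MemLp (fun ω => ‖U ω‖) 2 P :=
    (memLp_two_iff_integrable_sq hU.norm.aestronglyMeasurable).2 hU2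
  have mV : MemLp (fun ω => ‖V ω‖) 2 P :=
    (memLp_two_iff_integrable_sq hV.norm.aestronglyMeasurable).2 hV2
  have mD : MemLp (fun ω => ‖U ω - V ω‖) 2 P :=
    (((memLp_norm_iff hU.aestronglyMeasurable).1 mU).sub
      ((memLp_norm_iff hV.aestronglyMeasurable).1 mV)).norm
  have iU : Integrable (fun ω => ‖U ω‖ * ‖U ω - V ω‖) P := mU.integrable_mul mD
  have iV : Integrable (fun ω => ‖V ω‖ * ‖U ω - V ω‖) P := mV.integrable_mul mD
  have iD : Integrable (fun ω => ‖U ω - V ω‖) P := mD.integrable (by norm_num)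
  have h1 := stmt7_cs P _ _ (fun ω => norm_nonneg (U ω)) (fun ω => norm_nonneg (U ω - V ω)) mU mD
  have h2 := stmt7_cs P _ _ (fun ω => norm_nonneg (V ω)) (fun ω => norm_nonneg (U ω - V ω)) mV mD
  have h3 := stmt7_cs P (fun _ => 1) _ (fun ω => zero_le_one) (fun ω => norm_nonneg (U ω - V ω))
    (memLp_const 1) mD
  simp only [one_mul, one_pow, integral_const, probReal_univ, smul_eq_mul, mul_one,
    Real.sqrt_one] at h3
  have hb : ∫ ω, |Real.log (pV (V ω)) - Real.log (pV (U ω))| ∂P ≤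
      ∫ ω, (c₁ / 2 * (‖U ω‖ * ‖U ω - V ω‖) + c₁ / 2 * (‖V ω‖ * ‖U ω - V ω‖)
        + c₂ * ‖U ω - V ω‖) ∂P := by
    refine integral_mono_of_nonneg (Filter.Eventually.of_forall fun ω => abs_nonneg _)
      (((iU.const_mul _).add (iV.const_mul _)).add (iD.const_mul _))
      (Filter.Eventually.of_forall fun ω => ?_)
    refine (stmt7_pointwise c₁ c₂ pV hc₁ hreg (U ω) (V ω)).trans (le_of_eq ?_)
    ring
  refine hb.trans ?_
  have iUV : Integrable (fun ω => c₁ / 2 * (‖U ω‖ * ‖U ω - V ω‖)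
      + c₁ / 2 * (‖V ω‖ * ‖U ω - V ω‖)) P := (iU.const_mul _).add (iV.const_mul _)
  rw [integral_add iUV (iD.const_mul _),
    integral_add (iU.const_mul _) (iV.const_mul _), integral_const_mul, integral_const_mul,
    integral_const_mul]
  have k1 := mul_le_mul_of_nonneg_left h1 (by positivity : 0 ≤ c₁ / 2)
  have k2 := mul_le_mul_of_nonneg_left h2 (by positivity : 0 ≤ c₁ / 2)
  have k3 := mul_le_mul_of_nonneg_left h3 hc₂
  linarith

end
end

section
/- Let (U, V) be jointly distributed random vectors in ℝ^n with finite second moments, suppose U has a probability density p_U and V has a (c1,c2)-regular probability density p_V, and suppose the differential entropies h(U) = −∫ p_U log p_U and h(V) = −∫ p_V log p_V are finite. Then h(U) − h(V) ≤ ((c1/2)·√(E[‖U‖²]) + (c1/2)·√(E[‖V‖²]) + c2) · √(E[‖U − V‖²]). -/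
open MeasureTheory Real ProbabilityTheory
open scoped BigOperators ENNReal

noncomputable section
open MeasureTheory Real ProbabilityTheory

lemma aux_cs {Ω : Type*} [MeasurableSpace Ω] (P : Measure Ω) (f g : Ω → ℝ)
    (hf0 : ∀ x, 0 ≤ f x) (hg0 : ∀ x, 0 ≤ g x) (hf : MemLp f 2 P) (hg : MemLp g 2 P) :
    ∫ x, f x * g x ∂P ≤ Real.sqrt (∫ x, f x ^ 2 ∂P) * Real.sqrt (∫ x, g x ^ 2 ∂P) := by
  have h := integral_mul_le_Lp_mul_Lq_of_nonneg (μ := P) (f := f) (g := g)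
    Real.HolderConjugate.two_two (Filter.Eventually.of_forall hf0)
    (Filter.Eventually.of_forall hg0) (by simpa using hf) (by simpa using hg)
  simpa [Real.sqrt_eq_rpow] using h

lemma aux_path {n : ℕ} (c₁ c₂ : ℝ) (hc₁ : 0 < c₁)
    (f : EuclideanSpace ℝ (Fin n) → ℝ) (hreg : IsRegularDensity c₁ c₂ f)
    (u v : EuclideanSpace ℝ (Fin n)) :
    |Real.log (f v) - Real.log (f u)| ≤
      (c₁ / 2 * ‖u‖ + c₁ / 2 * ‖v‖ + c₂) * ‖u - v‖ := by
  obtain ⟨hpos, hdiff, hgrad⟩ := hreg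
  set g : EuclideanSpace ℝ (Fin n) → ℝ := fun y => Real.log (f y) with hg
  have hgd : Differentiable ℝ g := fun x => (hdiff x).log (hpos x).ne'
  have hγ : ∀ t : ℝ, HasDerivAt (fun t : ℝ => u + t • (v - u)) (v - u) t := by
    intro t
    simpa using ((hasDerivAt_id t).smul_const (v - u)).const_add u
  have hF : ∀ t : ℝ, HasDerivAt (fun t : ℝ => g (u + t • (v - u)) - g u)
      (fderiv ℝ g (u + t • (v - u)) (v - u)) t := by
    intro t
    exact ((hgd (u + t • (v - u))).hasFDerivAt.comp_hasDerivAt t (hγ t)).sub_const _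
  have hB : ∀ t : ℝ, HasDerivAt
      (fun t : ℝ => (c₁ * ‖u‖ * (t - t ^ 2 / 2) + c₁ * ‖v‖ * (t ^ 2 / 2) + c₂ * t) * ‖u - v‖)
      ((c₁ * ((1 - t) * ‖u‖ + t * ‖v‖) + c₂) * ‖u - v‖) t := by
    intro t
    have h1 := hasDerivAt_id' t
    have h2 : HasDerivAt (fun t : ℝ => t ^ 2 / 2) t t := by
      have := (hasDerivAt_pow 2 t).div_const 2
      simpa using this
    have h3 := ((((h1.sub h2).const_mul (c₁ * ‖u‖)).add (h2.const_mul (c₁ * ‖v‖))).add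
      (h1.const_mul c₂)).mul_const ‖u - v‖
    exact h3.congr_deriv (by ring)
  have key := image_norm_le_of_norm_deriv_right_le_deriv_boundary (a := (0 : ℝ)) (b := 1)
    (f := fun t : ℝ => g (u + t • (v - u)) - g u)
    (f' := fun t => fderiv ℝ g (u + t • (v - u)) (v - u))
    (fun t _ => (hF t).continuousAt.continuousWithinAt)
    (fun t _ => (hF t).hasDerivWithinAt) (by simp) hB
    (by
      intro t ht
      have hn : ‖fderiv ℝ g (u + t • (v - u))‖ ≤ c₁ * ‖u + t • (v - u)‖ + c₂ := by
        have := hgrad (u + t • (v - u))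
        simpa [gradient] using this
      have hx : ‖u + t • (v - u)‖ ≤ (1 - t) * ‖u‖ + t * ‖v‖ := by
        have : u + t • (v - u) = (1 - t) • u + t • v := by module
        rw [this]
        refine (norm_add_le _ _).trans ?_
        rw [norm_smul, norm_smul, Real.norm_of_nonneg ht.1,
          Real.norm_of_nonneg (by linarith [ht.2])]
      refine (ContinuousLinearMap.le_opNorm _ _).trans ?_
      rw [norm_sub_rev v u]
      gcongr
      exact hn.trans (by gcongr))
    (Set.right_mem_Icc.2 zero_le_one)
  have h1 : u + (1 : ℝ) • (v - u) = v := by module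
  simp only [h1, Real.norm_eq_abs] at key
  refine key.trans (le_of_eq ?_)
  ring

lemma aux_law {Ω : Type*} [MeasurableSpace Ω] (P : Measure Ω)
    {n : ℕ} (U : Ω → EuclideanSpace ℝ (Fin n)) (hU : Measurable U)
    (p : EuclideanSpace ℝ (Fin n) → ℝ) (hp : AEMeasurable p) (hp0 : ∀ x, 0 ≤ p x)
    (hlaw : Measure.map U P = volume.withDensity fun x => ENNReal.ofReal (p x))
    (g : EuclideanSpace ℝ (Fin n) → ℝ) (hg : Measurable g) :
    (Integrable (fun ω => g (U ω)) P ↔ Integrable (fun x => p x * g x)) ∧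
    ∫ ω, g (U ω) ∂P = ∫ x, p x * g x := by
  constructor
  · have h1 := integrable_map_measure (μ := P) (f := U) (g := g) hg.aestronglyMeasurable hU.aemeasurable
    rw [hlaw, integrable_withDensity_iff_integrable_smul₀' hp.ennreal_ofReal (by simp)] at h1
    simp only [smul_eq_mul, ENNReal.toReal_ofReal (hp0 _)] at h1
    exact h1.symm
  · rw [← integral_map (f := g) hU.aemeasurable hg.aestronglyMeasurable, hlaw,
      integral_withDensity_eq_integral_toReal_smul₀ hp.ennreal_ofReal (by simp)]
    simp [ENNReal.toReal_ofReal (hp0 _)]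

theorem stmt8 {Ω : Type*} [MeasurableSpace Ω] (P : Measure Ω) [IsProbabilityMeasure P]
    {n : ℕ} (U V : Ω → EuclideanSpace ℝ (Fin n)) (hU : Measurable U) (hV : Measurable V)
    (hU2 : Integrable (fun ω => ‖U ω‖ ^ 2) P) (hV2 : Integrable (fun ω => ‖V ω‖ ^ 2) P)
    (pU pV : EuclideanSpace ℝ (Fin n) → ℝ)
    (hlawU : Measure.map U P = volume.withDensity fun x => ENNReal.ofReal (pU x))
    (hlawV : Measure.map V P = volume.withDensity fun x => ENNReal.ofReal (pV x))
    (hdensU : IsDensity pU)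
    (c₁ c₂ : ℝ) (hc₁ : 0 < c₁) (hc₂ : 0 ≤ c₂) (hreg : IsRegularDensity c₁ c₂ pV)
    (hentU : Integrable fun x : EuclideanSpace ℝ (Fin n) => pU x * Real.log (pU x))
    (hentV : Integrable fun x : EuclideanSpace ℝ (Fin n) => pV x * Real.log (pV x)) :
    (-∫ x, pU x * Real.log (pU x)) - (-∫ x, pV x * Real.log (pV x)) ≤
      (c₁ / 2 * Real.sqrt (∫ ω, ‖U ω‖ ^ 2 ∂P) + c₁ / 2 * Real.sqrt (∫ ω, ‖V ω‖ ^ 2 ∂P) + c₂)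
        * Real.sqrt (∫ ω, ‖U ω - V ω‖ ^ 2 ∂P) := by
  have hpath := aux_path c₁ c₂ hc₁ pV hreg
  obtain ⟨hpos, hdiff, -⟩ := hreg
  obtain ⟨hU0, hUint, hU1⟩ := hdensU
  have hVm : Measurable pV := hdiff.continuous.measurable
  have hgm : Measurable (fun x => Real.log (pV x)) := hVm.log
  obtain ⟨iV, eV⟩ := aux_law P V hV pV hVm.aemeasurable (fun x => (hpos x).le) hlawV _ hgm
  obtain ⟨iU, eU⟩ := aux_law P U hU pU hUint.aemeasurable hU0 hlawU _ hgm
  obtain ⟨iV1, eV1⟩ := aux_law P V hV pV hVm.aemeasurable (fun x => (hpos x).le) hlawV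
    (fun _ => 1) measurable_const
  have hVint : Integrable pV := by simpa using iV1.1 (integrable_const _)
  have hV1 : ∫ x, pV x = 1 := by simpa using eV1.symm
  -- L² facts
  have mU : MemLp U 2 P := (memLp_two_iff_integrable_sq_norm hU.aestronglyMeasurable).2 hU2
  have mV : MemLp V 2 P := (memLp_two_iff_integrable_sq_norm hV.aestronglyMeasurable).2 hV2
  have mD : MemLp (fun ω => ‖U ω - V ω‖) 2 P := (mU.sub mV).norm
  have mU' : MemLp (fun ω => ‖U ω‖) 2 P := mU.norm
  have mV' : MemLp (fun ω => ‖V ω‖) 2 P := mV.norm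
  have j1 : Integrable (fun ω => ‖U ω‖ * ‖U ω - V ω‖) P := mU'.integrable_mul mD
  have j2 : Integrable (fun ω => ‖V ω‖ * ‖U ω - V ω‖) P := mV'.integrable_mul mD
  have j3 : Integrable (fun ω => ‖U ω - V ω‖) P := mD.integrable (by norm_num)
  have k1 := aux_cs P _ _ (fun ω => norm_nonneg (U ω)) (fun ω => norm_nonneg (U ω - V ω)) mU' mD
  have k2 := aux_cs P _ _ (fun ω => norm_nonneg (V ω)) (fun ω => norm_nonneg (U ω - V ω)) mV' mD
  have k3 := aux_cs P (fun _ => 1) _ (fun _ => zero_le_one) (fun ω => norm_nonneg (U ω - V ω))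
    (memLp_const _) mD
  simp only [one_mul, one_pow, integral_const, probReal_univ, smul_eq_mul, mul_one,
    Real.sqrt_one] at k3
  have j12 : Integrable (fun ω => c₁ / 2 * (‖U ω‖ * ‖U ω - V ω‖) +
      c₁ / 2 * (‖V ω‖ * ‖U ω - V ω‖)) P := (j1.const_mul _).add (j2.const_mul _)
  have jB : Integrable (fun ω => c₁ / 2 * (‖U ω‖ * ‖U ω - V ω‖) +
      c₁ / 2 * (‖V ω‖ * ‖U ω - V ω‖) + c₂ * ‖U ω - V ω‖) P :=
    ((j1.const_mul _).add (j2.const_mul _)).add (j3.const_mul _)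
  have IV : Integrable (fun ω => Real.log (pV (V ω))) P := iV.2 hentV
  have IU : Integrable (fun ω => Real.log (pV (U ω))) P := by
    refine (IV.abs.add jB).mono' (hgm.comp hU).aestronglyMeasurable
      (Filter.Eventually.of_forall fun ω => ?_)
    have h := hpath (U ω) (V ω)
    have h2 := abs_sub_abs_le_abs_sub (Real.log (pV (U ω))) (Real.log (pV (V ω)))
    rw [abs_sub_comm] at h2
    simp only [Real.norm_eq_abs, Pi.add_apply]
    linarith
  have IU' := iU.1 IU
  have gibbs : (∫ x, pU x * Real.log (pV x)) - ∫ x, pU x * Real.log (pU x) ≤ 0 := by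
    rw [← integral_sub IU' hentU]
    calc _ ≤ ∫ x, (pV x - pU x) := by
          refine integral_mono (IU'.sub hentU) (hVint.sub hUint) fun x => ?_
          simp only
          rcases (hU0 x).eq_or_lt with h | h
          · simp [← h, (hpos x).le]
          · have := Real.log_le_sub_one_of_pos (div_pos (hpos x) h)
            rw [Real.log_div (hpos x).ne' h.ne'] at this
            calc _ = pU x * (Real.log (pV x) - Real.log (pU x)) := by ring
              _ ≤ pU x * (pV x / pU x - 1) := by gcongr
              _ = _ := by field_simp
      _ = 0 := by rw [integral_sub hVint hUint, hV1, hU1, sub_self]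
  have main : (∫ ω, Real.log (pV (V ω)) ∂P) - ∫ ω, Real.log (pV (U ω)) ∂P ≤
      c₁ / 2 * (∫ ω, ‖U ω‖ * ‖U ω - V ω‖ ∂P) + c₁ / 2 * (∫ ω, ‖V ω‖ * ‖U ω - V ω‖ ∂P)
        + c₂ * ∫ ω, ‖U ω - V ω‖ ∂P := by
    rw [← integral_sub IV IU, ← integral_const_mul, ← integral_const_mul, ← integral_const_mul,
      ← integral_add (j1.const_mul _) (j2.const_mul _),
      ← integral_add j12 (j3.const_mul _)]
    refine integral_mono (IV.sub IU) jB fun ω => ?_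
    have h := (le_abs_self _).trans (hpath (U ω) (V ω))
    simp only
    linarith
  rw [eV, eU] at main
  have l1 := mul_le_mul_of_nonneg_left k1 (by positivity : 0 ≤ c₁ / 2)
  have l2 := mul_le_mul_of_nonneg_left k2 (by positivity : 0 ≤ c₁ / 2)
  have l3 := mul_le_mul_of_nonneg_left k3 hc₂
  linarith

end
end

section
/- Let f be a (c1,c2)-regular probability density on ℝ^n whose maximum is attained at the origin, i.e. f(x) ≤ f(0) for all x ∈ ℝ^n. Then for all x ∈ ℝ^n, f(x) ≥ f(0)·exp(−((c1/2)·‖x‖² + c2·‖x‖)). -/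
open MeasureTheory Real ProbabilityTheory
open scoped BigOperators ENNReal

noncomputable section
open MeasureTheory Real ProbabilityTheory

theorem stmt9 {n : ℕ} (f : EuclideanSpace ℝ (Fin n) → ℝ) (hdens : IsDensity f)
    (c₁ c₂ : ℝ) (hc₁ : 0 < c₁) (hc₂ : 0 ≤ c₂) (hreg : IsRegularDensity c₁ c₂ f)
    (hmax : ∀ x, f x ≤ f 0) :
    ∀ x : EuclideanSpace ℝ (Fin n),
      f 0 * Real.exp (-(c₁ / 2 * ‖x‖ ^ 2 + c₂ * ‖x‖)) ≤ f x := by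
  obtain ⟨hpos, hdiff, hgrad⟩ := hreg
  intro x
  have hG : ∀ y, HasGradientAt (fun y => Real.log (f y))
      (gradient (fun y => Real.log (f y)) y) y := fun y =>
    ((hdiff y).log (hpos y).ne').hasGradientAt
  have hder : ∀ t : ℝ, HasDerivAt
      (fun t : ℝ => Real.log (f (t • x)) + (c₁ / 2 * ‖x‖ ^ 2 * t ^ 2 + c₂ * ‖x‖ * t))
      (inner ℝ (gradient (fun y => Real.log (f y)) (t • x)) x
        + (c₁ / 2 * ‖x‖ ^ 2 * (2 * t) + c₂ * ‖x‖)) t := by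
    intro t
    have h1 : HasDerivAt (fun t : ℝ => t • x) x t := by
      simpa using (hasDerivAt_id t).smul_const x
    have h2 := (hG (t • x)).hasFDerivAt.comp_hasDerivAt t h1
    have h3 : HasDerivAt (fun t : ℝ => t ^ 2) (2 * t) t := by
      simpa using hasDerivAt_pow 2 t
    have h4 : HasDerivAt (fun t : ℝ => c₂ * ‖x‖ * t) (c₂ * ‖x‖) t := by
      simpa using (hasDerivAt_id t).const_mul (c₂ * ‖x‖)
    have h5 := (h3.const_mul (c₁ / 2 * ‖x‖ ^ 2)).add h4
    rw [InnerProductSpace.toDual_apply_apply] at h2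
    exact h2.add h5
  have hmono : MonotoneOn
      (fun t : ℝ => Real.log (f (t • x)) + (c₁ / 2 * ‖x‖ ^ 2 * t ^ 2 + c₂ * ‖x‖ * t))
      (Set.Icc 0 1) := by
    apply monotoneOn_of_deriv_nonneg (convex_Icc 0 1)
    · exact fun t _ => (hder t).continuousAt.continuousWithinAt
    · exact fun t _ => (hder t).differentiableAt.differentiableWithinAt
    · intro t ht
      rw [interior_Icc] at ht
      rw [(hder t).deriv]
      have h1 := abs_real_inner_le_norm (gradient (fun y => Real.log (f y)) (t • x)) x
      have h2 := hgrad (t • x)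
      rw [norm_smul, Real.norm_of_nonneg ht.1.le] at h2
      have h3 := mul_le_mul_of_nonneg_right h2 (norm_nonneg x)
      have h4 := neg_le_of_abs_le h1
      nlinarith
  have h := hmono (Set.left_mem_Icc.2 zero_le_one) (Set.right_mem_Icc.2 zero_le_one) zero_le_one
  simp only [zero_smul, one_smul] at h
  rw [← Real.exp_log (hpos 0), ← Real.exp_add, ← Real.le_log_iff_exp_le (hpos x)]
  linarith

end
end
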